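/- Let P be a finite set and F : 2^P → ℝ normalized, monotone and submodular with curvature bound k_f ∈ [0,1) (F(P) − F(P \ {p}) ≥ (1 − k_f)·F({p}) for all p ∈ P). Let 1 ≤ α < N, let S_1, S_2 ⊆ P be disjoint with |S_1| = α and |S_1 ∪ S_2| = N, and suppose F({a}) ≥ F({b}) for every a ∈ S_1 and b ∈ S_2. Suppose further F(S_2) ≥ c·f* for some reals c ≥ 0 and f* ≥ 0. Then for every A ⊆ S_1 ∪ S_2 with |A| ≤ α, F((S_1 ∪ S_2) \ A) ≥ max{1 − k_f, 1/(α+1), 1/(N−α)} · c · f*. In particular, taking c = (1/(1−k_g) + η/(1−k_f))^{−1} and f* the optimal value of the Robust Multiple-path Orienteering Problem yields the approximation guarantee of the proposed algorithm. -/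

import Mathlib

/-!
Removing `A` with `|A| ≤ |S₁|` deletes from `S₂` at most as many paths as it leaves alive in `S₁`,
because `|A \ S₁| ≤ |S₁ \ A|`. Since every path of `S₁` is individually at least as good as every
path of `S₂`, what `S₂` loses is at most the sum of the individual rewards of `S₁ \ A`, and the
curvature bound makes that sum, up to the factor `1 - k`, an actual gain over `F (S₂ \ A)`.
Moreover, each single path of `S₂` is worth at most the surviving team: it survives itself, or some
path of `S₁` survives in its place. Bounding all of `S₂`, or only its removed part, path by path
gives the factors `1 / (N - α)` and `1 / (α + 1)`.
-/

section SetFunctions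

open Finset

variable {P : Type*} [DecidableEq P]

/-- Submodularity of a set function on the finite subsets of `P`, with values in any ordered
additive structure and without finiteness of `P`. -/
def IsSubmodular {M : Type*} [Add M] [LE M] (F : Finset P → M) : Prop :=
  ∀ A B : Finset P, F (A ∪ B) + F (A ∩ B) ≤ F A + F B

/-- `k` bounds the total curvature of `F` on the ground set `U`: each `p ∈ U` has, when added last,
a marginal value of at least the fraction `1 - k` of its individual value. The ground set is a
parameter, so that the notion restricts to subsets and makes sense for infinite `P`. -/
def HasCurvatureBound {R : Type*} [Ring R] [LE R] (F : Finset P → R) (U : Finset P) (k : R) :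
    Prop :=
  ∀ p ∈ U, (1 - k) * F {p} ≤ F U - F (U \ {p})

section OrderedMonoid

variable {M : Type*} [AddCommMonoid M] [PartialOrder M] [IsOrderedAddMonoid M] {F : Finset P → M}

theorem IsSubmodular.union_le_add (hsub : IsSubmodular F) (hnonneg : ∀ X, 0 ≤ F X)
    (X Y : Finset P) : F (X ∪ Y) ≤ F X + F Y :=
  (le_add_of_nonneg_right (hnonneg _)).trans (hsub X Y)

theorem IsSubmodular.le_sum_singleton (hsub : IsSubmodular F) (hF0 : F ∅ = 0)
    (hnonneg : ∀ X, 0 ≤ F X) (X : Finset P) : F X ≤ ∑ x ∈ X, F {x} := by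
  induction X using Finset.induction_on with
  | empty => simp [hF0]
  | insert a X ha ih =>
    rw [sum_insert ha, insert_eq]
    exact (hsub.union_le_add hnonneg _ _).trans (by gcongr)

theorem IsSubmodular.le_sdiff_add_sum_inter (hsub : IsSubmodular F) (hF0 : F ∅ = 0)
    (hnonneg : ∀ X, 0 ≤ F X) (S A : Finset P) : F S ≤ F (S \ A) + ∑ b ∈ S ∩ A, F {b} :=
  calc F S = F (S \ A ∪ S ∩ A) := by rw [sdiff_union_inter]
    _ ≤ F (S \ A) + F (S ∩ A) := hsub.union_le_add hnonneg _ _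
    _ ≤ F (S \ A) + ∑ b ∈ S ∩ A, F {b} := by
      gcongr
      exact hsub.le_sum_singleton hF0 hnonneg _

theorem sum_le_sum_of_card_le_card {ι κ : Type*} {s : Finset ι} {t : Finset κ} {f : ι → M}
    {g : κ → M} (hcard : #s ≤ #t) (hfg : ∀ i ∈ s, ∀ j ∈ t, f i ≤ g j) (hg : ∀ j ∈ t, 0 ≤ g j) :
    ∑ i ∈ s, f i ≤ ∑ j ∈ t, g j := by
  obtain ⟨u, hut, hu⟩ := exists_subset_card_eq hcard
  let e : s ≃ u := equivOfCardEq hu.symm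
  calc ∑ i ∈ s, f i = ∑ i : s, f i := (sum_coe_sort s f).symm
    _ ≤ ∑ i : s, g (e i) := sum_le_sum fun i _ => hfg i i.2 _ (hut (e i).2)
    _ = ∑ j ∈ u, g j := by rw [e.sum_comp fun j : u => g j, sum_coe_sort]
    _ ≤ ∑ j ∈ t, g j := sum_le_sum_of_subset_of_nonneg hut fun j hj _ => hg j hj

end OrderedMonoid

section Curvature

variable {R : Type*} [Ring R] [PartialOrder R] [IsOrderedAddMonoid R] {F : Finset P → R} {k : R}

theorem HasCurvatureBound.mono {U V : Finset P} (hsub : IsSubmodular F)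
    (hcurv : HasCurvatureBound F U k) (hVU : V ⊆ U) : HasCurvatureBound F V k := by
  intro p hp
  have hunion : V ∪ U \ {p} = U := by grind
  have hinter : V ∩ (U \ {p}) = V \ {p} := by grind
  have hmarginal := hsub V (U \ {p})
  rw [hunion, hinter] at hmarginal
  exact (hcurv p (hVU hp)).trans (sub_le_sub_iff.mpr hmarginal)

theorem HasCurvatureBound.add_mul_sum_singleton_le {X Y : Finset P} (hsub : IsSubmodular F)
    (hcurv : HasCurvatureBound F (X ∪ Y) k) (hXY : Disjoint X Y) :
    F X + (1 - k) * ∑ y ∈ Y, F {y} ≤ F (X ∪ Y) := by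
  induction Y using Finset.induction_on with
  | empty => simp
  | insert a Y ha ih =>
    obtain ⟨haX, hXY⟩ := disjoint_insert_right.mp hXY
    have hrest : (X ∪ insert a Y) \ {a} = X ∪ Y := by grind
    have hlast := hcurv a (by simp)
    have hbefore := ih (hcurv.mono hsub (by grind)) hXY
    rw [hrest] at hlast
    calc F X + (1 - k) * ∑ y ∈ insert a Y, F {y}
        = F X + (1 - k) * ∑ y ∈ Y, F {y} + (1 - k) * F {a} := by
          rw [sum_insert ha, mul_add, add_comm ((1 - k) * F {a}), add_assoc]
      _ ≤ F (X ∪ Y) + (F (X ∪ insert a Y) - F (X ∪ Y)) := add_le_add hbefore hlast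
      _ = F (X ∪ insert a Y) := add_sub_cancel _ _

end Curvature

section Removal

variable {S₁ S₂ A : Finset P}

theorem card_inter_le_card_sdiff (hdisj : Disjoint S₁ S₂) (hA : #A ≤ #S₁) :
    #(S₂ ∩ A) ≤ #(S₁ \ A) :=
  calc #(S₂ ∩ A) ≤ #(A \ S₁) := card_le_card fun b hb => by
        rw [mem_inter] at hb
        exact mem_sdiff.mpr ⟨hb.2, disjoint_right.mp hdisj hb.1⟩
    _ ≤ #(S₁ \ A) := card_sdiff_le_card_sdiff_iff.mpr hA

theorem singleton_le_union_sdiff {M : Type*} [Preorder M] {F : Finset P → M} (hmono : Monotone F)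
    (hdisj : Disjoint S₁ S₂) (hord : ∀ a ∈ S₁, ∀ b ∈ S₂, F {b} ≤ F {a}) (hA : #A ≤ #S₁) {b : P}
    (hb : b ∈ S₂) : F {b} ≤ F ((S₁ ∪ S₂) \ A) := by
  by_cases hbA : b ∈ A
  · have hlost : 0 < #(S₂ ∩ A) := card_pos.mpr ⟨b, mem_inter.mpr ⟨hb, hbA⟩⟩
    obtain ⟨a, ha⟩ := card_pos.mp (hlost.trans_le (card_inter_le_card_sdiff hdisj hA))
    obtain ⟨haS₁, haA⟩ := mem_sdiff.mp ha
    exact (hord a haS₁ b hb).trans (hmono (by simp [haS₁, haA]))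
  · exact hmono (by simp [hb, hbA])

section OrderedMonoid

variable {M : Type*} [AddCommMonoid M] [PartialOrder M] [IsOrderedAddMonoid M] {F : Finset P → M}

theorem IsSubmodular.le_card_nsmul_union_sdiff (hsub : IsSubmodular F) (hF0 : F ∅ = 0)
    (hmono : Monotone F) (hdisj : Disjoint S₁ S₂) (hord : ∀ a ∈ S₁, ∀ b ∈ S₂, F {b} ≤ F {a})
    (hA : #A ≤ #S₁) : F S₂ ≤ #S₂ • F ((S₁ ∪ S₂) \ A) :=
  (hsub.le_sum_singleton hF0 (fun X => hF0 ▸ hmono X.empty_subset) S₂).trans <|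
    sum_le_card_nsmul _ _ _ fun _ => singleton_le_union_sdiff hmono hdisj hord hA

theorem IsSubmodular.le_card_succ_nsmul_union_sdiff (hsub : IsSubmodular F) (hF0 : F ∅ = 0)
    (hmono : Monotone F) (hdisj : Disjoint S₁ S₂) (hord : ∀ a ∈ S₁, ∀ b ∈ S₂, F {b} ≤ F {a})
    (hA : #A ≤ #S₁) : F S₂ ≤ (#S₁ + 1) • F ((S₁ ∪ S₂) \ A) := by
  have hnonneg (X : Finset P) : 0 ≤ F X := hF0 ▸ hmono X.empty_subset
  calc F S₂ ≤ F (S₂ \ A) + ∑ b ∈ S₂ ∩ A, F {b} := hsub.le_sdiff_add_sum_inter hF0 hnonneg S₂ A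
    _ ≤ F ((S₁ ∪ S₂) \ A) + #(S₂ ∩ A) • F ((S₁ ∪ S₂) \ A) :=
      add_le_add (hmono (sdiff_subset_sdiff subset_union_right le_rfl)) <|
        sum_le_card_nsmul _ _ _ fun _ hb =>
          singleton_le_union_sdiff hmono hdisj hord hA (mem_inter.mp hb).1
    _ ≤ F ((S₁ ∪ S₂) \ A) + #S₁ • F ((S₁ ∪ S₂) \ A) :=
      add_le_add_right (nsmul_le_nsmul_left (hnonneg _) <|
        (card_inter_le_card_sdiff hdisj hA).trans (card_le_card sdiff_subset)) _
    _ = (#S₁ + 1) • F ((S₁ ∪ S₂) \ A) := by rw [succ_nsmul']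

end OrderedMonoid

theorem HasCurvatureBound.one_sub_mul_le_union_sdiff {R : Type*} [Ring R] [PartialOrder R]
    [IsOrderedRing R] {F : Finset P → R} {k : R} (hcurv : HasCurvatureBound F (S₁ ∪ S₂) k)
    (hsub : IsSubmodular F) (hF0 : F ∅ = 0) (hnonneg : ∀ X, 0 ≤ F X) (hk0 : 0 ≤ k) (hk1 : k ≤ 1)
    (hdisj : Disjoint S₁ S₂) (hord : ∀ a ∈ S₁, ∀ b ∈ S₂, F {b} ≤ F {a}) (hA : #A ≤ #S₁) :
    (1 - k) * F S₂ ≤ F ((S₁ ∪ S₂) \ A) := by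
  have hsurvivors : S₂ \ A ∪ S₁ \ A = (S₁ ∪ S₂) \ A := by
    rw [← union_sdiff_distrib, union_comm]
  have hcurv' : HasCurvatureBound F (S₂ \ A ∪ S₁ \ A) k :=
    hcurv.mono hsub (hsurvivors ▸ sdiff_subset)
  have hexchange : ∑ b ∈ S₂ ∩ A, F {b} ≤ ∑ a ∈ S₁ \ A, F {a} :=
    sum_le_sum_of_card_le_card (card_inter_le_card_sdiff hdisj hA)
      (fun b hb a ha => hord a (mem_sdiff.mp ha).1 b (mem_inter.mp hb).1) fun a _ => hnonneg {a}
  calc (1 - k) * F S₂ ≤ (1 - k) * (F (S₂ \ A) + ∑ a ∈ S₁ \ A, F {a}) :=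
        mul_le_mul_of_nonneg_left ((hsub.le_sdiff_add_sum_inter hF0 hnonneg S₂ A).trans (by gcongr))
          (sub_nonneg.mpr hk1)
    _ ≤ F (S₂ \ A) + (1 - k) * ∑ a ∈ S₁ \ A, F {a} := by
        rw [mul_add]
        gcongr
        exact mul_le_of_le_one_left (hnonneg _) (sub_le_self 1 hk0)
    _ ≤ F (S₂ \ A ∪ S₁ \ A) := hcurv'.add_mul_sum_singleton_le hsub <|
        hdisj.symm.mono sdiff_subset sdiff_subset
    _ = F ((S₁ ∪ S₂) \ A) := by rw [hsurvivors]

theorem rmop_algorithm_guarantee_general {K : Type*} [Field K] [LinearOrder K]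
    [IsStrictOrderedRing K] {F : Finset P → K} (hF0 : F ∅ = 0) (hmono : Monotone F)
    (hsub : IsSubmodular F) {k : K} (hk0 : 0 ≤ k) (hk1 : k ≤ 1)
    (hcurv : HasCurvatureBound F (S₁ ∪ S₂) k) {α N : ℕ} (hαN : α < N) (hdisj : Disjoint S₁ S₂)
    (hS₁ : #S₁ = α) (hN : #(S₁ ∪ S₂) = N) (hord : ∀ a ∈ S₁, ∀ b ∈ S₂, F {b} ≤ F {a})
    {v : K} (hv : v ≤ F S₂) (hA : #A ≤ α) :
    max (max (1 - k) (1 / ((α : K) + 1))) (1 / ((N : K) - (α : K))) * v ≤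
      F ((S₁ ∪ S₂) \ A) := by
  subst hS₁
  have hnonneg (X : Finset P) : 0 ≤ F X := hF0 ▸ hmono X.empty_subset
  have hcardS₂ : #S₂ = N - #S₁ := by
    rw [← hN, card_union_of_disjoint hdisj, Nat.add_sub_cancel_left]
  have hbySize := hsub.le_card_nsmul_union_sdiff hF0 hmono hdisj hord hA
  have hbyLoss := hsub.le_card_succ_nsmul_union_sdiff hF0 hmono hdisj hord hA
  rw [nsmul_eq_mul, hcardS₂, Nat.cast_sub hαN.le] at hbySize
  rw [nsmul_eq_mul, Nat.cast_succ] at hbyLoss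
  have hα_succ_pos : 0 < (#S₁ : K) + 1 := by positivity
  have hsub_pos : 0 < (N : K) - #S₁ := sub_pos.mpr (Nat.cast_lt.mpr hαN)
  calc max (max (1 - k) (1 / ((#S₁ : K) + 1))) (1 / ((N : K) - #S₁)) * v
      ≤ max (max (1 - k) (1 / ((#S₁ : K) + 1))) (1 / ((N : K) - #S₁)) * F S₂ := by gcongr
    _ = max (max ((1 - k) * F S₂) (F S₂ / (#S₁ + 1))) (F S₂ / (N - #S₁)) := by
      simp only [max_mul_of_nonneg _ _ (hnonneg S₂), one_div_mul_eq_div]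
    _ ≤ F ((S₁ ∪ S₂) \ A) := max_le (max_le
      (hcurv.one_sub_mul_le_union_sdiff hsub hF0 hnonneg hk0 hk1 hdisj hord hA)
      ((div_le_iff₀' hα_succ_pos).mpr hbyLoss)) ((div_le_iff₀' hsub_pos).mpr hbySize)

end Removal

end SetFunctions

/-- Approximation guarantee of the proposed algorithm for RMOP. -/
theorem rmop_algorithm_guarantee
    {P : Type*} [Fintype P] [DecidableEq P]
    (F : Finset P → ℝ)
    (hF0 : F ∅ = 0)
    (hFmono : ∀ A B : Finset P, A ⊆ B → F A ≤ F B)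
    (hFsub : ∀ A B : Finset P, F A + F B ≥ F (A ∪ B) + F (A ∩ B))
    (kf : ℝ) (hkf0 : 0 ≤ kf) (hkf1 : kf < 1)
    (hcurv : ∀ p : P, F Finset.univ - F (Finset.univ \ {p}) ≥ (1 - kf) * F {p})
    (α N : ℕ) (hα : 1 ≤ α) (hαN : α < N)
    (S1 S2 : Finset P) (hdisj : Disjoint S1 S2)
    (hS1card : S1.card = α) (hNcard : (S1 ∪ S2).card = N)
    (hord : ∀ a ∈ S1, ∀ b ∈ S2, F {a} ≥ F {b})
    (c fstar : ℝ) (hc : 0 ≤ c) (hfstar : 0 ≤ fstar)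
    (hS2 : F S2 ≥ c * fstar) :
    ∀ A ⊆ S1 ∪ S2, A.card ≤ α →
      F ((S1 ∪ S2) \ A) ≥
        max (max (1 - kf) (1 / ((α : ℝ) + 1))) (1 / ((N : ℝ) - (α : ℝ))) * c * fstar := by
  intro A _ hA
  rw [ge_iff_le, mul_assoc]
  exact rmop_algorithm_guarantee_general hF0 (fun _ _ => hFmono _ _) hFsub hkf0 hkf1.le
    (HasCurvatureBound.mono hFsub (fun p _ => hcurv p) (Finset.subset_univ _)) hαN hdisj
    hS1card hNcard hord hS2 hA
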